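/- arXiv:2604.19138 — 2 statements merged into one kernel-verified Lean document; each statement's English description precedes it below -/
import Mathlib

section
/- Let t be a positive integer and let G be a finite simple graph with component max-leaf at most t. Then the number of nonempty vertex sets S ⊆ V(G) such that the induced subgraph G[S] is connected is at most |V(G)|^t. -/
/-!
Call `S` connected if `G[S]` is connected. The only consequence of the leaf bound used for `t ≥ 2`
is `ncard_ext_le`: a connected `S` has at most `t` outside neighbors. Indeed the component `C` of `S` has
a connected dominating set `D` with at least as many outside neighbors as `S`
(`exists_dominating`), and a spanning tree of `C` in which every vertex of `C \ D` hangs from `D`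
has all the vertices of `N(D)` as leaves.

A connected set is determined by one of its vertices together with its outside neighborhood
(`eq_of_ext_eq`). Writing `n` for the number of vertices, this leaves three cases.

* `t ≥ 3`. The connected sets with fewer than `t` outside neighbors inject into the pairs `(v, X)`
  with `v ∉ X` and `|X| < t` (`card_small`). A `t`-set `X` is the outside neighborhood of at most two
  connected sets: from three such sets `A`, `B`, `C` and `x ∈ X`, the connected set `A ∪ {x}` would
  have at least `t + 1` outside neighbors (`card_large`, through `ext_triple`). So the number of
  connected sets is at most `n * ∑ j < t, (n - 1).choose j + 2 * n.choose t`, which is at most `n ^ t`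
  by induction on `t` (`count_le_pow`).

* `t = 2`. That bound is too weak here. Instead, for each `k` there are at most `n` connected sets of
  size `k` (`card_connSets_ncard_le`). For `k ≥ 2`, count pairs `(S, v)` where `v ∈ S` and `S \ {v}`
  is connected: each `S` has at least two such `v`, and each `v` at most two such `S`, because `v`
  has at most two neighbors and the connected sets avoiding `v` that contain a given neighbor of `v`
  form a chain (`subset_or_subset`).

* `t = 1`. A tree with an edge has two leaves, so `G` has no edges.
-/

open SimpleGraph

/-- `T` has at most `t` leaves, a leaf being a vertex of degree 1. -/
def LeafCountLE {α : Type*} (T : SimpleGraph α) (t : ℕ) : Prop :=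
  {v : α | (T.neighborSet v).ncard = 1}.ncard ≤ t

/-- Every spanning tree of `H` has at most `t` leaves. -/
def MaxLeafLE {α : Type*} (H : SimpleGraph α) (t : ℕ) : Prop :=
  ∀ T : SimpleGraph α, T ≤ H → T.IsTree → LeafCountLE T t

/-- `G` has component max-leaf at most `t`: every spanning tree of (the graph induced on)
every connected component of `G` has at most `t` leaves. -/
def CompMaxLeafLE {V : Type*} (G : SimpleGraph V) (t : ℕ) : Prop :=
  ∀ C : G.ConnectedComponent, MaxLeafLE (G.induce C.supp) t

/-- The (open, external) neighborhood `N_G(S)`: vertices outside `S` with a neighbor in `S`. -/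
def extNeighborSet {V : Type*} (G : SimpleGraph V) (S : Set V) : Set V :=
  {v : V | v ∉ S ∧ ∃ u ∈ S, G.Adj u v}

section ConnectedSubsets

/-! ### Connected sets and their outside neighborhoods -/

variable {V : Type*} {G : SimpleGraph V}

/-- A connected set that meets `A` without being contained in `A` has an edge leaving `A`. -/
theorem exists_exit {S A : Set V} (hS : (G.induce S).Connected)
    (hSA : (S ∩ A).Nonempty) (hn : ¬ S ⊆ A) :
    ∃ a ∈ S, ∃ b ∈ S, a ∈ A ∧ b ∉ A ∧ G.Adj a b := by
  obtain ⟨a, haS, haA⟩ := hSA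
  obtain ⟨b, hbS, hbA⟩ := Set.not_subset.1 hn
  obtain ⟨p⟩ := hS.preconnected ⟨a, haS⟩ ⟨b, hbS⟩
  obtain ⟨d, -, h1, h2⟩ := p.exists_boundary_dart {x | x.1 ∈ A} haA hbA
  exact ⟨d.fst.1, d.fst.2, d.snd.1, d.snd.2, h1, h2, d.adj⟩

theorem subset_of_disjoint_ext {S A : Set V} (hS : (G.induce S).Connected)
    (hSA : (S ∩ A).Nonempty) (hd : Disjoint S (extNeighborSet G A)) : S ⊆ A := by
  by_contra hn
  obtain ⟨a, -, b, hb, haA, hbA, hab⟩ := exists_exit hS hSA hn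
  exact Set.disjoint_left.1 hd hb ⟨hbA, a, haA, hab⟩

theorem disjoint_ext (S : Set V) : Disjoint S (extNeighborSet G S) :=
  Set.disjoint_left.2 fun _ hx h => h.1 hx

/-- A connected set is determined by any one of its vertices and its outside neighborhood. -/
theorem eq_of_ext_eq {A B : Set V} (hA : (G.induce A).Connected) (hB : (G.induce B).Connected)
    (hAB : (A ∩ B).Nonempty) (h : extNeighborSet G A = extNeighborSet G B) : A = B :=
  (subset_of_disjoint_ext hA hAB (h ▸ disjoint_ext A)).antisymm
    (subset_of_disjoint_ext hB (Set.inter_comm A B ▸ hAB) (h ▸ disjoint_ext B))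

theorem connected_singleton (v : V) : (G.induce {v}).Connected :=
  { preconnected := Preconnected.of_subsingleton, nonempty := ⟨⟨v, rfl⟩⟩ }

theorem connected_insert {S : Set V} {a w : V} (hS : (G.induce S).Connected)
    (ha : a ∈ S) (haw : G.Adj a w) : (G.induce (insert w S)).Connected := by
  rw [← Set.union_singleton]
  exact connected_induce_union hS.preconnected (connected_singleton w).preconnected ha rfl haw

theorem subset_supp {S : Set V} (hS : (G.induce S).Connected) {v : V} (hv : v ∈ S) :
    S ⊆ (G.connectedComponentMk v).supp := fun u hu =>
  ConnectedComponent.sound <|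
    (hS.preconnected ⟨u, hu⟩ ⟨v, hv⟩).map (Embedding.induce S).toHom

/-- If `S` is connected and contains `v`, then the component of `v` has a connected dominating set `D`
with at least as many outside neighbors as `S`. A maximal connected `D` that contains `v` and has at
least that many outside neighbors works: otherwise some `w ∈ N(D)` has a
neighbor `u` at distance two from `D`, and passing to `D ∪ {w}` trades `w` for `u` in `N(D)`. -/
theorem exists_dominating [Finite V] {S : Set V} (hS : (G.induce S).Connected) {v : V}
    (hv : v ∈ S) : ∃ D : Set V, v ∈ D ∧ (G.induce D).Connected ∧
      (extNeighborSet G S).ncard ≤ (extNeighborSet G D).ncard ∧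
      (G.connectedComponentMk v).supp ⊆ D ∪ extNeighborSet G D := by
  obtain ⟨D, hD⟩ := (Set.toFinite {D : Set V | v ∈ D ∧ (G.induce D).Connected ∧
      (extNeighborSet G S).ncard ≤ (extNeighborSet G D).ncard}).exists_maximal ⟨S, hv, hS, le_rfl⟩
  obtain ⟨⟨hvD, hDc, hcard⟩, hmax⟩ := hD
  refine ⟨D, hvD, hDc, hcard, ?_⟩
  have hC : (G.induce (G.connectedComponentMk v).supp).Connected :=
    ConnectedComponent.connected_toSimpleGraph _
  by_contra hn
  obtain ⟨w, -, u, -, hw, hu, hwu⟩ := exists_exit hC ⟨v, rfl, Or.inl hvD⟩ hn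
  have huD : u ∉ D := fun h => hu (Or.inl h)
  have huN : u ∉ extNeighborSet G D := fun h => hu (Or.inr h)
  have hwN : w ∈ extNeighborSet G D := by
    rcases hw with hw | hw
    · exact absurd ⟨huD, w, hw, hwu⟩ huN
    · exact hw
  have ⟨hwD, a, ha, haw⟩ := hwN
  have hsub : insert u (extNeighborSet G D \ {w}) ⊆ extNeighborSet G (insert w D) := by
    rintro x (rfl | ⟨⟨hx, b, hb, hbx⟩, hxw⟩)
    · exact ⟨by rintro (rfl | h); exacts [hwu.ne rfl, huD h], w, Or.inl rfl, hwu⟩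
    · exact ⟨by rintro (rfl | h); exacts [hxw rfl, hx h], b, Or.inr hb, hbx⟩
  have h1 := Set.ncard_le_ncard hsub (Set.toFinite _)
  rw [Set.ncard_insert_of_notMem (fun h => huN h.1) (Set.toFinite _),
    Set.ncard_sdiff_singleton_add_one hwN (Set.toFinite _)] at h1
  exact hwD (hmax ⟨Or.inr hvD, connected_insert hDc ha haw, hcard.trans h1⟩
    (Set.subset_insert w D) (Or.inl rfl))

/-- If `G` has component max-leaf at most `t`, then a connected set has at most `t` outside
neighbors. -/
theorem ncard_ext_le [Finite V] {t : ℕ} (hG : CompMaxLeafLE G t) {S : Set V}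
    (hS : (G.induce S).Connected) : (extNeighborSet G S).ncard ≤ t := by
  obtain ⟨⟨v, hv⟩⟩ := hS.nonempty
  obtain ⟨D, hvD, hD, hcard, hdom⟩ := exists_dominating hS hv
  refine hcard.trans ?_
  set C := G.connectedComponentMk v with hCdef
  have hDC : D ⊆ C.supp := subset_supp hD hvD
  have hnb : ∀ x : C.supp, x.1 ∉ D → ∃ y : C.supp, y.1 ∈ D ∧ G.Adj y.1 x.1 := by
    intro x hx
    rcases hdom x.2 with h | ⟨-, y, hy, hyx⟩
    · exact absurd h hx
    · exact ⟨⟨y, hDC hy⟩, hy, hyx⟩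
  choose! f hfD hfadj using hnb
  -- `H` keeps the edges inside `D` and, for each `x ∈ C \ D`, the single edge from `x` to `f x`.
  -- Every spanning tree of `H` therefore has all the vertices of `C \ D` as leaves.
  let H : SimpleGraph C.supp :=
    { Adj := fun a b => G.Adj a.1 b.1 ∧
        ((a.1 ∈ D ∧ b.1 ∈ D) ∨ (b.1 ∉ D ∧ a = f b) ∨ (a.1 ∉ D ∧ b = f a))
      symm := ⟨fun a b h => ⟨h.1.symm, by tauto⟩⟩
      loopless := ⟨fun a h => h.1.ne rfl⟩ }
  have hle : H ≤ G.induce C.supp := fun a b h => h.1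
  let v' : C.supp := ⟨v, rfl⟩
  have hDreach : ∀ x : C.supp, x.1 ∈ D → H.Reachable v' x := by
    intro x hx
    let φ : G.induce D →g H :=
      { toFun := fun y => ⟨y.1, hDC y.2⟩
        map_rel' := fun {a b} h => ⟨h, Or.inl ⟨a.2, b.2⟩⟩ }
    exact (hD.preconnected ⟨v, hvD⟩ ⟨x.1, hx⟩).map φ
  have hreach : ∀ x : C.supp, H.Reachable v' x := by
    intro x
    by_cases hx : x.1 ∈ D
    · exact hDreach x hx
    · exact (hDreach (f x) (hfD x hx)).trans
        (Adj.reachable ⟨hfadj x hx, Or.inr (Or.inl ⟨hx, rfl⟩)⟩)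
  have hHc : H.Connected := (connected_iff_exists_forall_reachable H).2 ⟨v', hreach⟩
  obtain ⟨T, hTH, hT⟩ := hHc.exists_isTree_le
  refine le_trans ?_ (hG C T (hTH.trans hle) hT)
  have hNC : extNeighborSet G D ⊆ C.supp := by
    rintro x ⟨-, y, hy, hyx⟩
    exact (C.mem_supp_congr_adj hyx).1 (hDC hy)
  rw [← Set.ncard_image_of_injective _ (Subtype.val_injective (p := (· ∈ C.supp)))]
  refine Set.ncard_le_ncard ?_ (Set.toFinite _)
  intro x hx
  have hxD := hx.1
  refine ⟨⟨x, hNC hx⟩, ?_, rfl⟩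
  set x' : C.supp := ⟨x, hNC hx⟩ with hx'
  have hsub : T.neighborSet x' ⊆ {f x'} := by
    intro y hy
    rcases (hTH hy).2 with h | h | h
    · exact absurd h.1 hxD
    · have := hfD y h.1
      rw [← h.2] at this
      exact absurd this hxD
    · exact h.2
  obtain ⟨y, hy⟩ : (T.neighborSet x').Nonempty := by
    have : Nontrivial C.supp := ⟨v', x', fun h => hxD (by
      have := congrArg Subtype.val h; simp only [v', hx'] at this; exact this ▸ hvD)⟩
    exact hT.connected.preconnected.exists_adj_of_nontrivial x'
  show (T.neighborSet x').ncard = 1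
  rw [Set.ncard_eq_one]
  exact ⟨f x', hsub.antisymm (by rintro _ rfl; exact hsub hy ▸ hy)⟩

/-! ### Max-leaf at most two -/

/-- For `t = 2`, the connected sets that avoid `v` and contain a given neighbor `w` of `v` form a
chain. If `A` and `B` were incomparable, a maximal connected `I ⊆ A ∩ B` containing `w` would have
three outside neighbors: `v`, one in `A \ B` and one in `B \ A`. -/
theorem subset_or_subset [Finite V] (hG : CompMaxLeafLE G 2) {A B : Set V}
    (hA : (G.induce A).Connected) (hB : (G.induce B).Connected) {v w : V}
    (hwA : w ∈ A) (hwB : w ∈ B) (hvA : v ∉ A) (hvB : v ∉ B) (hvw : G.Adj v w) :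
    A ⊆ B ∨ B ⊆ A := by
  obtain ⟨I, ⟨hwI, hI, hIA, hIB⟩, hmax⟩ := (Set.toFinite {I : Set V | w ∈ I ∧
      (G.induce I).Connected ∧ I ⊆ A ∧ I ⊆ B}).exists_maximal
    ⟨{w}, rfl, connected_singleton w, by simpa using hwA, by simpa using hwB⟩
  by_contra! hn
  have key : ∀ i ∈ I, ∀ x, x ∉ I → G.Adj i x → x ∈ A → x ∉ B := by
    intro i hi x hx hix hxA hxB
    exact hx (hmax ⟨Or.inr hwI, connected_insert hI hi hix,
      Set.insert_subset hxA hIA, Set.insert_subset hxB hIB⟩ (Set.subset_insert x I) (Or.inl rfl))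
  obtain ⟨i, -, a, haA, hi, haI, hia⟩ :=
    exists_exit hA ⟨w, hwA, hwI⟩ (fun h => hn.1 (h.trans hIB))
  obtain ⟨j, -, b, hbB, hj, hbI, hjb⟩ :=
    exists_exit hB ⟨w, hwB, hwI⟩ (fun h => hn.2 (h.trans hIA))
  have haB := key i hi a haI hia haA
  have h3 : ({v, a, b} : Set V).ncard = 3 := by
    refine Set.ncard_eq_three.2 ⟨v, a, b, ?_, ?_, ?_, rfl⟩ <;> rintro rfl <;> contradiction
  have hsub : ({v, a, b} : Set V) ⊆ extNeighborSet G I := by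
    rintro x (rfl | rfl | rfl)
    · exact ⟨fun h => hvA (hIA h), w, hwI, hvw.symm⟩
    · exact ⟨haI, i, hi, hia⟩
    · exact ⟨hbI, j, hj, hjb⟩
  have := Set.ncard_le_ncard hsub (Set.toFinite _)
  have := ncard_ext_le hG hI
  omega

/-- The two vertices are leaves of a spanning tree of `G[S]`. -/
theorem exists_two_noncut [Finite V] {S : Set V} (hS : (G.induce S).Connected)
    (h2 : 2 ≤ S.ncard) : ∃ u ∈ S, ∃ v ∈ S, u ≠ v ∧
      (G.induce (S \ {u})).Connected ∧ (G.induce (S \ {v})).Connected := by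
  classical
  have := Fintype.ofFinite V
  have : Nontrivial S := by
    rw [Set.nontrivial_coe_sort]
    exact Set.one_lt_ncard_iff_nontrivial.1 h2
  obtain ⟨T, hTS, hT⟩ := hS.exists_isTree_le
  obtain ⟨u, v, huv, hu, hv⟩ := hT.exists_ne_and_degree_eq_one
  have key : ∀ x : S, T.degree x = 1 → (G.induce (S \ {x.1})).Connected := by
    intro x hx
    have h := hT.connected.induce_compl_singleton_of_degree_eq_one hx
    let φ : T.induce {x}ᶜ →g G.induce (S \ {x.1}) :=
      { toFun := fun y => ⟨y.1.1, y.1.2, fun h => y.2 (Subtype.ext h)⟩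
        map_rel' := fun {a b} h => hTS h }
    refine h.map φ ?_
    rintro ⟨y, hy, hyx⟩
    exact ⟨⟨⟨y, hy⟩, fun h => hyx (congrArg Subtype.val h)⟩, rfl⟩
  exact ⟨u, u.2, v, v.2, fun h => huv (Subtype.ext h), key u hu, key v hv⟩

open Classical in
/-- The vertex sets that induce a connected subgraph. They are nonempty, since
`SimpleGraph.Connected` includes nonemptiness. -/
noncomputable def connSets [Fintype V] (G : SimpleGraph V) : Finset (Set V) :=
  {S | (G.induce S).Connected}

theorem mem_connSets [Fintype V] {S : Set V} :
    S ∈ connSets G ↔ (G.induce S).Connected := by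
  simp [connSets]

theorem ext_singleton (v : V) : extNeighborSet G {v} = G.neighborSet v := by
  ext x
  simp only [extNeighborSet, Set.mem_ofPred_eq, Set.mem_singleton_iff, exists_eq_left,
    mem_neighborSet, and_iff_right_iff_imp]
  rintro h rfl
  exact h.ne rfl

open Classical in
/-- For `t = 2`, there are at most `|V|` connected sets of each size `k`. -/
theorem card_connSets_ncard_le [Fintype V] (hG : CompMaxLeafLE G 2) (k : ℕ) :
    {S ∈ connSets G | S.ncard = k}.card ≤ Fintype.card V := by
  rcases Nat.lt_or_ge k 2 with hk | hk
  · calc {S ∈ connSets G | S.ncard = k}.card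
        ≤ ((Finset.univ : Finset V).image (fun v => ({v} : Set V))).card := by
          refine Finset.card_le_card fun S hS => ?_
          obtain ⟨hS, hSk⟩ := Finset.mem_filter.1 hS
          obtain ⟨⟨v, hv⟩⟩ := (mem_connSets.1 hS).nonempty
          have hpos := (Set.ncard_pos (Set.toFinite S)).2 ⟨v, hv⟩
          obtain ⟨a, rfl⟩ := Set.ncard_eq_one.1 (show S.ncard = 1 by omega)
          exact Finset.mem_image_of_mem _ (Finset.mem_univ a)
      _ ≤ Fintype.card V := Finset.card_image_le
  -- Double count the pairs `(S, v)` for which `v` is a non-cut vertex of `G[S]`.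
  · refine Nat.le_of_mul_le_mul_right ?_ (show 0 < 2 by norm_num)
    rw [← Finset.card_univ]
    refine Finset.card_mul_le_card_mul
      (fun (S : Set V) (v : V) => v ∈ S ∧ (G.induce (S \ {v})).Connected) ?_ ?_
    · intro S hS
      obtain ⟨hS, hSk⟩ := Finset.mem_filter.1 hS
      obtain ⟨u, huS, v, hvS, huv, hu, hv⟩ := exists_two_noncut (mem_connSets.1 hS) (hSk ▸ hk)
      rw [← Finset.card_pair huv]
      refine Finset.card_le_card ?_
      intro x hx
      rw [Finset.mem_insert, Finset.mem_singleton] at hx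
      rcases hx with rfl | rfl <;> simp [Finset.bipartiteAbove, *]
    · intro v _
      have hmem : ∀ S ∈ ({S ∈ connSets G | S.ncard = k}.bipartiteBelow
          (fun (S : Set V) (v : V) => v ∈ S ∧ (G.induce (S \ {v})).Connected) v),
          S.ncard = k ∧ v ∈ S ∧ (G.induce (S \ {v})).Connected ∧
            ∃ w, w ∈ S \ {v} ∧ G.Adj v w := by
        intro S hS
        simp only [Finset.bipartiteBelow, Finset.mem_filter, mem_connSets] at hS
        obtain ⟨⟨hS, hSk⟩, hvS, hSv⟩ := hS
        obtain ⟨⟨y, hy⟩⟩ := hSv.nonempty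
        obtain ⟨a, -, b, hb, rfl, hbv, hab⟩ := exists_exit hS (A := {v}) ⟨v, hvS, rfl⟩
          (fun h => hy.2 (h hy.1))
        exact ⟨hSk, hvS, hSv, b, ⟨hb, hbv⟩, hab⟩
      have : Nonempty V := ⟨v⟩
      -- `f S` is a neighbor of `v` in `S \ {v}`; by the chain property it determines `S`.
      choose! hk' hv' hc' f hf hfv using hmem
      have hdeg : (G.neighborSet v).toFinset.card ≤ 2 := by
        rw [← Set.ncard_eq_toFinset_card', ← ext_singleton]
        exact ncard_ext_le hG (connected_singleton v)
      refine le_trans (Finset.card_le_card_of_injOn f ?_ ?_) hdeg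
      · intro S hS
        simpa using hfv S hS
      · intro A hA B hB hAB
        have hsub := subset_or_subset hG (hc' A hA) (hc' B hB) (hf A hA) (hAB ▸ hf B hB)
          (fun h => h.2 rfl) (fun h => h.2 rfl) (hfv A hA)
        have hins : ∀ S : Set V, v ∈ S → insert v (S \ {v}) = S := fun S h => by
          rw [Set.insert_sdiff_singleton, Set.insert_eq_of_mem h]
        have hcard : A.ncard = B.ncard := (hk' A hA).trans (hk' B hB).symm
        have hup : ∀ {X Y : Set V}, v ∈ X → v ∈ Y → X \ {v} ⊆ Y \ {v} → X ⊆ Y :=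
          fun {X Y} hX hY h => hins X hX ▸ hins Y hY ▸ Set.insert_subset_insert h
        rcases hsub with h | h
        · exact Set.eq_of_subset_of_ncard_le (hup (hv' A hA) (hv' B hB) h) hcard.ge
            (Set.toFinite _)
        · exact (Set.eq_of_subset_of_ncard_le (hup (hv' B hB) (hv' A hA) h) hcard.le
            (Set.toFinite _)).symm

theorem card_connSets_two [Fintype V] (hG : CompMaxLeafLE G 2) :
    (connSets G).card ≤ Fintype.card V ^ 2 := by
  classical
  have h := Finset.card_le_mul_card_image_of_maps_to (s := connSets G)
    (t := Finset.Icc 1 (Fintype.card V)) (f := Set.ncard) ?_ (Fintype.card V)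
    (fun k _ => card_connSets_ncard_le hG k)
  · simpa [sq] using h
  · intro S hS
    obtain ⟨⟨v, hv⟩⟩ := (mem_connSets.1 hS).nonempty
    refine Finset.mem_Icc.2 ⟨(Set.ncard_pos (Set.toFinite S)).2 ⟨v, hv⟩, ?_⟩
    rw [← Nat.card_eq_fintype_card]
    exact Set.ncard_le_card S

/-! ### Max-leaf at most one -/

theorem not_adj_of_one [Finite V] (hG : CompMaxLeafLE G 1) (u v : V) : ¬ G.Adj u v := by
  classical
  have := Fintype.ofFinite V
  intro huv
  set C := G.connectedComponentMk u
  have hC : (G.induce C.supp).Connected := ConnectedComponent.connected_toSimpleGraph _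
  have : Nontrivial C.supp := Set.nontrivial_coe_sort.2
    ⟨u, rfl, v, (C.mem_supp_congr_adj huv).1 rfl, huv.ne⟩
  obtain ⟨T, hTC, hT⟩ := hC.exists_isTree_le
  obtain ⟨a, b, hab, ha, hb⟩ := hT.exists_ne_and_degree_eq_one
  have h := hG C T hTC hT
  have hsub : ({a, b} : Set C.supp) ⊆ {v | (T.neighborSet v).ncard = 1} := by
    rintro x (rfl | rfl)
    · exact (Set.ncard_eq_toFinset_card' _).trans ha
    · exact (Set.ncard_eq_toFinset_card' _).trans hb
  have h2 := Set.ncard_le_ncard hsub (Set.toFinite _)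
  rw [Set.ncard_pair hab] at h2
  exact absurd (h2.trans h) (by norm_num)

theorem card_connSets_one [Fintype V] (hG : CompMaxLeafLE G 1) :
    (connSets G).card ≤ Fintype.card V := by
  classical
  calc (connSets G).card
      ≤ ((Finset.univ : Finset V).image (fun v => ({v} : Set V))).card := by
        refine Finset.card_le_card fun S hS => ?_
        have hS := mem_connSets.1 hS
        obtain ⟨⟨v, hv⟩⟩ := hS.nonempty
        refine Finset.mem_image.2 ⟨v, Finset.mem_univ v, ?_⟩
        refine (Set.singleton_subset_iff.2 hv).antisymm ?_
        by_contra hn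
        obtain ⟨a, -, b, -, -, -, hab⟩ := exists_exit hS (A := {v}) ⟨v, hv, rfl⟩ hn
        exact not_adj_of_one hG a b hab
    _ ≤ Fintype.card V := Finset.card_image_le

/-! ### Max-leaf at most `t` for `t ≥ 3` -/

/-- No `t`-set `X` is the outside neighborhood of three connected sets `A`, `B`, `C`. They would be
disjoint, and for `x ∈ X` the set `A ∪ {x}` would have as outside neighbors all of `X \ {x}`, a vertex
of `B` and a vertex of `C`. -/
theorem ext_triple [Finite V] {t : ℕ} (hG : CompMaxLeafLE G t) {A B C X : Set V}
    (hA : (G.induce A).Connected) (hB : (G.induce B).Connected) (hC : (G.induce C).Connected)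
    (hXA : extNeighborSet G A = X) (hXB : extNeighborSet G B = X) (hXC : extNeighborSet G C = X)
    (hX : X.Nonempty) (hXt : X.ncard = t) (hAB : A ≠ B) (hAC : A ≠ C) (hBC : B ≠ C) : False := by
  obtain ⟨x, hx⟩ := hX
  have hdis : ∀ {P Q : Set V}, (G.induce P).Connected → (G.induce Q).Connected →
      extNeighborSet G P = X → extNeighborSet G Q = X → P ≠ Q → ∀ y ∈ P, y ∉ Q :=
    fun hP hQ hPX hQX hne y hyP hyQ =>
      hne (eq_of_ext_eq hP hQ ⟨y, hyP, hyQ⟩ (hPX.trans hQX.symm))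
  obtain ⟨-, a, ha, hax⟩ : x ∈ extNeighborSet G A := hXA ▸ hx
  obtain ⟨hxB, b, hb, hbx⟩ : x ∈ extNeighborSet G B := hXB ▸ hx
  obtain ⟨hxC, c, hc, hcx⟩ : x ∈ extNeighborSet G C := hXC ▸ hx
  have hbX : b ∉ X := fun h => (hXB ▸ h : b ∈ extNeighborSet G B).1 hb
  have hcX : c ∉ X := fun h => (hXC ▸ h : c ∈ extNeighborSet G C).1 hc
  have hbc : b ≠ c := fun h => hdis hB hC hXB hXC hBC b hb (h ▸ hc)
  have hsub : insert b (insert c (X \ {x})) ⊆ extNeighborSet G (insert x A) := by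
    rintro y (rfl | rfl | ⟨hyX, hyx⟩)
    · refine ⟨?_, x, Or.inl rfl, hbx.symm⟩
      rintro (rfl | h)
      · exact hxB hb
      · exact hdis hA hB hXA hXB hAB _ h hb
    · refine ⟨?_, x, Or.inl rfl, hcx.symm⟩
      rintro (rfl | h)
      · exact hxC hc
      · exact hdis hA hC hXA hXC hAC _ h hc
    · rw [← hXA] at hyX
      obtain ⟨hyA, z, hz, hzy⟩ := hyX
      refine ⟨?_, z, Or.inr hz, hzy⟩
      rintro (h | h)
      exacts [hyx h, hyA h]
  have h1 := Set.ncard_le_ncard hsub (Set.toFinite _)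
  rw [Set.ncard_insert_of_notMem (by rintro (h | h); exacts [hbc h, hbX h.1]) (Set.toFinite _),
    Set.ncard_insert_of_notMem (fun h => hcX h.1) (Set.toFinite _),
    Set.ncard_sdiff_singleton_add_one hx (Set.toFinite _)] at h1
  have := ncard_ext_le hG (connected_insert hA ha hax)
  omega

open Classical in
/-- Sending `S` to a chosen vertex `v ∈ S` and to its outside neighborhood, a subset of `V \ {v}`, is
injective. -/
theorem card_small [Fintype V] (t : ℕ) :
    {S ∈ connSets G | (extNeighborSet G S).ncard < t}.card ≤
      Fintype.card V * ∑ j ∈ Finset.range t, (Fintype.card V - 1).choose j := by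
  let F : V → Finset (Finset V) := fun v =>
    (Finset.range t).biUnion fun j => (Finset.univ.erase v).powersetCard j
  have hF : ∀ v, (F v).card ≤ ∑ j ∈ Finset.range t, (Fintype.card V - 1).choose j := by
    intro v
    refine Finset.card_biUnion_le.trans (le_of_eq ?_)
    simp [Finset.card_powersetCard, Finset.card_erase_of_mem]
  have hne : ∀ S ∈ connSets G, ∃ v, v ∈ S := fun S hS =>
    let ⟨⟨v, hv⟩⟩ := (mem_connSets.1 hS).nonempty; ⟨v, hv⟩
  rcases isEmpty_or_nonempty V with hV | hV
  · rw [Finset.card_eq_zero.2 (Finset.eq_empty_of_forall_notMem fun S hS => ?_)]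
    · exact Nat.zero_le _
    · exact (hne S (Finset.mem_filter.1 hS).1).elim fun v _ => hV.elim v
  choose! r hr using hne
  calc {S ∈ connSets G | (extNeighborSet G S).ncard < t}.card
      ≤ ((Finset.univ : Finset V).sigma F).card := by
        refine Finset.card_le_card_of_injOn
          (fun S => ⟨r S, (extNeighborSet G S).toFinset⟩) ?_ ?_
        · intro S hS
          obtain ⟨hS, hSt⟩ := Finset.mem_filter.1 (Finset.mem_coe.1 hS)
          simp only [F, Finset.coe_sigma, Set.mem_sigma_iff, Finset.mem_coe, Finset.mem_univ,
            true_and, Finset.mem_biUnion, Finset.mem_range, Finset.mem_powersetCard]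
          refine ⟨_, hSt, ?_, (Set.ncard_eq_toFinset_card' _).symm⟩
          intro x hx
          rw [Set.mem_toFinset] at hx
          exact Finset.mem_erase.2 ⟨fun h => hx.1 (h ▸ hr S hS), Finset.mem_univ x⟩
        · intro A hA B hB hAB
          have hA := (Finset.mem_filter.1 (Finset.mem_coe.1 hA)).1
          have hB := (Finset.mem_filter.1 (Finset.mem_coe.1 hB)).1
          simp only [Sigma.mk.injEq, heq_eq_eq, Set.toFinset_inj] at hAB
          exact eq_of_ext_eq (mem_connSets.1 hA) (mem_connSets.1 hB)
            ⟨r A, hr A hA, hAB.1 ▸ hr B hB⟩ hAB.2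
    _ = ∑ v : V, (F v).card := Finset.card_sigma _ _
    _ ≤ ∑ _v : V, ∑ j ∈ Finset.range t, (Fintype.card V - 1).choose j :=
        Finset.sum_le_sum fun v _ => hF v
    _ = _ := by simp

open Classical in
theorem card_large [Fintype V] {t : ℕ} (ht : 0 < t) (hG : CompMaxLeafLE G t) :
    {S ∈ connSets G | (extNeighborSet G S).ncard = t}.card ≤ 2 * (Fintype.card V).choose t := by
  rw [← Finset.card_univ, ← Finset.card_powersetCard]
  refine Finset.card_le_mul_card_image_of_maps_to
    (f := fun S => (extNeighborSet G S).toFinset) ?_ 2 ?_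
  · intro S hS
    rw [Finset.mem_powersetCard, ← Set.ncard_eq_toFinset_card']
    exact ⟨Finset.subset_univ _, (Finset.mem_filter.1 hS).2⟩
  · intro X hX
    by_contra! hlt
    obtain ⟨A, hA, B, hB, C, hC, hAB, hAC, hBC⟩ := Finset.two_lt_card.1 hlt
    have key : ∀ S, S ∈ ({S ∈ {S ∈ connSets G | (extNeighborSet G S).ncard = t} |
        (extNeighborSet G S).toFinset = X}) →
        (G.induce S).Connected ∧ extNeighborSet G S = X := by
      intro S hS
      simp only [Finset.mem_filter, mem_connSets] at hS
      exact ⟨hS.1.1, by rw [← hS.2, Set.coe_toFinset]⟩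
    have hXt := (Finset.mem_powersetCard.1 hX).2
    have hXne : (X : Set V).Nonempty := by
      rw [Finset.coe_nonempty, ← Finset.card_pos]; omega
    exact ext_triple hG (key A hA).1 (key B hB).1 (key C hC).1 (key A hA).2 (key B hB).2
      (key C hC).2 hXne (by rw [Set.ncard_coe_finset, hXt]) hAB hAC hBC

theorem add_three_le_factorial {t : ℕ} (ht : 3 ≤ t) : t + 3 ≤ (t + 1).factorial := by
  induction t, ht using Nat.le_induction with
  | base => decide
  | succ k hk ih => rw [Nat.factorial_succ]; nlinarith

/-- The increment estimate behind the induction step of `count_le_pow`, with `m = |V| - 1`. -/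
theorem add_three_mul_choose_le (m : ℕ) {t : ℕ} (ht : 3 ≤ t) :
    (t + 3) * (m + 1).choose (t + 1) ≤ m * (m + 1) ^ t := by
  calc (t + 3) * (m + 1).choose (t + 1) ≤ (t + 1).factorial * (m + 1).choose (t + 1) :=
        Nat.mul_le_mul_right _ (add_three_le_factorial ht)
    _ = (m + 1).descFactorial (t + 1) := (Nat.descFactorial_eq_factorial_mul_choose _ _).symm
    _ = (m + 1) * m.descFactorial t := Nat.succ_descFactorial_succ _ _
    _ ≤ (m + 1) * (m * (m + 1) ^ (t - 1)) := by
        obtain ⟨s, rfl⟩ : ∃ s, t = s + 1 := ⟨t - 1, by omega⟩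
        refine Nat.mul_le_mul_left _ ?_
        rw [Nat.add_sub_cancel]
        calc m.descFactorial (s + 1) ≤ m ^ (s + 1) := Nat.descFactorial_le_pow _ _
          _ = m * m ^ s := by ring
          _ ≤ m * (m + 1) ^ s := by gcongr; omega
    _ = m * (m + 1) ^ t := by
        obtain ⟨s, rfl⟩ : ∃ s, t = s + 1 := ⟨t - 1, by omega⟩
        rw [Nat.add_sub_cancel]; ring

/-- Here `m = |V| - 1`. For `t = 2` the inequality fails as soon as `m ≥ 1`, so the induction starts at `t = 3`. -/
theorem count_le_pow (m : ℕ) {t : ℕ} (ht : 3 ≤ t) :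
    (m + 1) * ∑ j ∈ Finset.range t, m.choose j + 2 * (m + 1).choose t ≤ (m + 1) ^ t := by
  induction t, ht using Nat.le_induction with
  | base =>
    have h1 : 2 * m.choose 2 = m * (m - 1) := by
      have := Nat.descFactorial_eq_factorial_mul_choose m 2
      simpa [Nat.descFactorial, Nat.factorial, mul_comm] using this.symm
    have h2 : 6 * (m + 1).choose 3 = (m + 1) * (m * (m - 1)) := by
      have := Nat.descFactorial_eq_factorial_mul_choose (m + 1) 3
      rw [Nat.succ_descFactorial_succ] at this
      simpa [Nat.descFactorial, Nat.factorial, mul_comm] using this.symm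
    simp only [Finset.sum_range_succ, Finset.sum_range_zero, Nat.choose_zero_right,
      Nat.choose_one_right]
    rcases m with _ | m
    · decide
    · rw [Nat.add_sub_cancel] at h1 h2
      nlinarith [h1, h2]
  | succ k hk ih =>
    have h := add_three_mul_choose_le m hk
    have h' : (m + 1) * m.choose k = (m + 1).choose (k + 1) * (k + 1) :=
      Nat.add_one_mul_choose_eq m k
    rw [Finset.sum_range_succ, pow_succ]
    nlinarith

theorem card_connSets_ge_three [Fintype V] {t : ℕ} (ht : 3 ≤ t) (hG : CompMaxLeafLE G t) :
    (connSets G).card ≤ Fintype.card V ^ t := by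
  classical
  have hsplit : (connSets G).card ≤
      {S ∈ connSets G | (extNeighborSet G S).ncard < t}.card +
      {S ∈ connSets G | (extNeighborSet G S).ncard = t}.card := by
    refine le_trans (Finset.card_le_card fun S hS => ?_) (Finset.card_union_le _ _)
    have := ncard_ext_le hG (mem_connSets.1 hS)
    rw [Finset.mem_union, Finset.mem_filter, Finset.mem_filter]
    rcases this.lt_or_eq with h | h
    exacts [Or.inl ⟨hS, h⟩, Or.inr ⟨hS, h⟩]
  have h1 := card_small (G := G) t
  have h2 := card_large (by omega) hG
  rcases hn : Fintype.card V with _ | m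
  · rw [hn, Nat.choose_eq_zero_of_lt (by omega : 0 < t)] at h2
    rw [hn, Nat.zero_mul] at h1
    exact le_trans (by omega) (Nat.zero_le _)
  · rw [hn] at h1 h2
    have := count_le_pow m ht
    rw [Nat.add_sub_cancel] at h1
    omega

end ConnectedSubsets

theorem stmt1 {V : Type*} [Fintype V] (G : SimpleGraph V) (t : ℕ) (ht : 0 < t)
    (hG : CompMaxLeafLE G t) :
    {S : Set V | S.Nonempty ∧ (G.induce S).Connected}.ncard ≤ Fintype.card V ^ t := by
  have hset : {S : Set V | S.Nonempty ∧ (G.induce S).Connected} = (connSets G : Set (Set V)) := by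
    ext S
    rw [Finset.mem_coe, mem_connSets]
    exact ⟨fun h => h.2, fun h => ⟨Set.nonempty_coe_sort.1 h.nonempty, h⟩⟩
  rw [hset, Set.ncard_coe_finset]
  obtain rfl | rfl | h3 : t = 1 ∨ t = 2 ∨ 3 ≤ t := by omega
  · simpa using card_connSets_one hG
  · exact card_connSets_two hG
  · exact card_connSets_ge_three h3 hG
end

section
/- Let c and p be natural numbers and let T be a finite tree (a connected acyclic simple graph) with cutwidth at most c and diameter at most p. Then |V(T)| ≤ (p+1)^c. -/
/-!
Write `x` and `y` for the first and the last vertex of the enumeration. A path `P` in the tree from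
`x` to `y` has at most `p + 1` vertices and uses an edge of every cut of the enumeration. Deleting
the edges of `P` therefore lowers every nonempty cut by at least one, while every vertex stays
connected to some vertex of `P`; so the vertices split into at most `p + 1` components of cutwidth
at most `c - 1`, and induction on `c` gives the bound.

To avoid passing to subtypes, the induction (`ncard_component_le`) runs over graphs on a fixed
vertex set and bounds the component of one vertex, counting only the cut edges of this component
with respect to a fixed injection into `ℕ`. The diameter condition is replaced by a bound on the
length of all paths, which is inherited by subgraphs; acyclicity serves only to deduce it from the
diameter bound.
-/

open SimpleGraph

/-- `G` has cutwidth at most `c`: there is an enumeration of the vertices such that every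
prefix of the enumeration is crossed by at most `c` edges. -/
def CutwidthLE {V : Type*} [Fintype V] (G : SimpleGraph V) (c : ℕ) : Prop :=
  ∃ e : V ≃ Fin (Fintype.card V),
    ∀ i : ℕ, i + 1 < Fintype.card V →
      {p : V × V | G.Adj p.1 p.2 ∧ (e p.1 : ℕ) ≤ i ∧ i < (e p.2 : ℕ)}.ncard ≤ c

/-- A walk from the lower to the upper side of a threshold uses an edge of the cut. -/
lemma exists_crossing_edge {V : Type*} {H : SimpleGraph V} (f : V → ℕ) {a b : V}
    (q : H.Walk a b) (i : ℕ) (ha : f a ≤ i) (hb : i < f b) :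
    ∃ u v : V, s(u, v) ∈ q.edges ∧ H.Adj u v ∧ f u ≤ i ∧ i < f v := by
  obtain ⟨d, hd, h1, h2⟩ := q.exists_boundary_dart {v | f v ≤ i} ha (by simpa using hb)
  refine ⟨d.fst, d.snd, ?_, d.adj, h1, by simpa using h2⟩
  exact List.mem_map_of_mem (f := Dart.edge) hd

/-- After deletion of the edges of a walk `P`, every vertex that was connected to a vertex of `P`
is still connected to some vertex of `P`. -/
lemma exists_reachable_deleteEdges {V : Type*} {H : SimpleGraph V} {a b : V} (P : H.Walk a b)
    {w z : V} (q : H.Walk w z) (hz : z ∈ P.support) :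
    ∃ x ∈ P.support, (H.deleteEdges {e | e ∈ P.edges}).Reachable x w := by
  induction q with
  | nil => exact ⟨_, hz, Reachable.refl _⟩
  | @cons u v z h q ih =>
    by_cases hu : u ∈ P.support
    · exact ⟨u, hu, Reachable.refl _⟩
    · obtain ⟨x, hx, hr⟩ := ih hz
      refine ⟨x, hx, hr.trans (Adj.reachable ?_)⟩
      rw [deleteEdges_adj]
      exact ⟨h.symm, fun he => hu (P.snd_mem_support_of_mem_edges he)⟩

/-- The inductive form of the bound: in a graph whose paths have length at most `p`, a component
all of whose cuts have at most `c` edges has at most `(p + 1) ^ c` vertices. -/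
lemma ncard_component_le {V : Type*} [Finite V] (f : V → ℕ) (hf : Function.Injective f) (p c : ℕ) :
    ∀ H : SimpleGraph V, (∀ (u v : V) (q : H.Walk u v), q.IsPath → q.length ≤ p) →
    ∀ v : V, (∀ i : ℕ, {e : V × V | H.Reachable v e.1 ∧ H.Adj e.1 e.2 ∧
        f e.1 ≤ i ∧ i < f e.2}.ncard ≤ c) →
      {w | H.Reachable v w}.ncard ≤ (p + 1) ^ c := by
  classical
  induction c with
  | zero =>
    intro H _ v hcut
    have hno : ∀ a b, H.Reachable v a → H.Reachable a b → ¬ f a < f b := by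
      intro a b hva hab hlt
      obtain ⟨q⟩ := hab
      obtain ⟨x, y, hmem, hadj, h1, h2⟩ := exists_crossing_edge f q (f a) le_rfl hlt
      have h0 := Nat.le_zero.mp (hcut (f a))
      rw [Set.ncard_eq_zero] at h0
      have hx : H.Reachable a x := ⟨q.takeUntil x (q.fst_mem_support_of_mem_edges hmem)⟩
      exact Set.eq_empty_iff_forall_notMem.mp h0 (x, y) ⟨hva.trans hx, hadj, h1, h2⟩
    rw [pow_zero, Set.ncard_le_one]
    intro a ha b hb
    have hab : H.Reachable a b := ha.symm.trans hb
    exact hf (le_antisymm (not_lt.mp (hno b a hb hab.symm)) (not_lt.mp (hno a b ha hab)))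
  | succ c ih =>
    intro H hp v hcut
    have hne : {w | H.Reachable v w}.Nonempty := ⟨v, Reachable.refl v⟩
    obtain ⟨a, ha, hamin⟩ := Set.exists_min_image _ f (Set.toFinite _) hne
    obtain ⟨b, hb, hbmax⟩ := Set.exists_max_image _ f (Set.toFinite _) hne
    simp only [Set.mem_ofPred_eq] at ha hb hamin hbmax
    obtain ⟨P, hP⟩ := (ha.symm.trans hb).exists_isPath
    set H' := H.deleteEdges {e | e ∈ P.edges} with hH'
    have hle : H' ≤ H := deleteEdges_le _
    have hp' : ∀ (u v : V) (q : H'.Walk u v), q.IsPath → q.length ≤ p := by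
      intro u v q hq
      simpa using hp u v (q.mapLe hle) (hq.mapLe hle)
    have hcomp : ∀ x ∈ P.support, {w | H'.Reachable x w}.ncard ≤ (p + 1) ^ c := by
      intro x hx
      have hvx : H.Reachable v x := ha.trans ⟨P.takeUntil x hx⟩
      refine ih H' hp' x fun i => ?_
      rcases Set.eq_empty_or_nonempty {e : V × V | H'.Reachable x e.1 ∧ H'.Adj e.1 e.2 ∧
        f e.1 ≤ i ∧ i < f e.2} with h0 | ⟨⟨s, t⟩, hs, hst, hsi, hit⟩
      · rw [h0]; simp
      · have hvs : H.Reachable v s := hvx.trans (hs.mono hle)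
        have hvt : H.Reachable v t := hvs.trans (hle hst).reachable
        -- A nonempty cut of a component separates `a` from `b`, so `P` uses one of its edges.
        obtain ⟨y, z, hmem, hadj, h1, h2⟩ := exists_crossing_edge f P i
          ((hamin s hvs).trans hsi) (hit.trans_le (hbmax t hvt))
        have hay : H.Reachable a y := ⟨P.takeUntil y (P.fst_mem_support_of_mem_edges hmem)⟩
        refine Nat.le_of_lt_succ (lt_of_lt_of_le (Set.ncard_lt_ncard ?_ (Set.toFinite _)) (hcut i))
        refine (Set.ssubset_iff_of_subset ?_).mpr ⟨(y, z), ⟨ha.trans hay, hadj, h1, h2⟩, ?_⟩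
        · rintro ⟨s, t⟩ ⟨hs, hst, h⟩
          exact ⟨hvx.trans (hs.mono hle), hle hst, h⟩
        · rintro ⟨-, hyz, -⟩
          rw [hH', deleteEdges_adj] at hyz
          exact hyz.2 hmem
    have hcover : {w | H.Reachable v w} ⊆ ⋃ x ∈ P.support.toFinset, {w | H'.Reachable x w} := by
      intro w hw
      obtain ⟨q⟩ : H.Reachable w a := (Reachable.symm hw).trans ha
      obtain ⟨x, hx, hr⟩ := exists_reachable_deleteEdges P q P.start_mem_support
      simp only [Set.mem_iUnion]
      exact ⟨x, List.mem_toFinset.mpr hx, hr⟩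
    calc {w | H.Reachable v w}.ncard
        ≤ (⋃ x ∈ P.support.toFinset, {w | H'.Reachable x w}).ncard :=
          Set.ncard_le_ncard hcover (Set.toFinite _)
      _ ≤ ∑ x ∈ P.support.toFinset, {w | H'.Reachable x w}.ncard :=
          Finset.set_ncard_biUnion_le _ _
      _ ≤ P.support.toFinset.card • (p + 1) ^ c :=
          Finset.sum_le_card_nsmul _ _ _ fun x hx => hcomp x (List.mem_toFinset.mp hx)
      _ ≤ (p + 1) * (p + 1) ^ c := by
          rw [smul_eq_mul]
          refine Nat.mul_le_mul_right _ ((List.toFinset_card_le _).trans ?_)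
          rw [Walk.length_support]
          exact Nat.succ_le_succ (hp a b P hP)
      _ = (p + 1) ^ (c + 1) := by ring

theorem stmt7 {V : Type*} [Fintype V] (G : SimpleGraph V) (c p : ℕ)
    (htree : G.IsTree) (hcw : CutwidthLE G c)
    (hdiam : ∀ u v : V, G.dist u v ≤ p) :
    Fintype.card V ≤ (p + 1) ^ c := by
  obtain ⟨e, he⟩ := hcw
  have hconn := htree.connected
  obtain ⟨v⟩ := hconn.nonempty
  have hp : ∀ (u v : V) (q : G.Walk u v), q.IsPath → q.length ≤ p := by
    intro u v q hq
    -- Paths in a tree are unique, hence `q` is a geodesic.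
    obtain ⟨r, hr, hlen⟩ := (hconn u v).exists_path_of_dist
    have : q = r := congrArg Subtype.val
      ((htree.isAcyclic.subsingleton_path u v).elim ⟨q, hq⟩ ⟨r, hr⟩)
    rw [this, hlen]
    exact hdiam u v
  have key := ncard_component_le (fun v => (e v : ℕ)) (Fin.val_injective.comp e.injective) p c
    G hp v fun i => by
      by_cases hi : i + 1 < Fintype.card V
      · exact (Set.ncard_le_ncard (fun x hx => hx.2) (Set.toFinite _)).trans (he i hi)
        -- Positions are smaller than `Fintype.card V`, so no vertex lies beyond `i`.
      · refine (Nat.le_of_eq ?_).trans (Nat.zero_le c)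
        rw [Set.ncard_eq_zero]
        refine Set.eq_empty_iff_forall_notMem.mpr ?_
        rintro x ⟨-, -, -, h⟩
        have := (e x.2).isLt
        omega
  have huniv : {w | G.Reachable v w} = Set.univ := Set.eq_univ_of_forall fun w => hconn v w
  rwa [huniv, Set.ncard_univ, Nat.card_eq_fintype_card] at key
end
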